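/- arXiv:2101.03984 — 2 statements merged into one kernel-verified Lean document; each statement's English description precedes it below -/
import Mathlib

section
/- Let B ⊂ ℝ⁴ be open and f = (f¹,f²,f³): B → ℝ³ smooth, with graph tangent vectors w_a(y) and Fourier–Mukai curvature F_∇^S as in the context. Then the following are equivalent: (1) φ(w_a(y), w_b(y), w_c(y)) = 0 for all 4 ≤ a < b < c ≤ 7 and every y ∈ B (i.e., the graph S is a coassociative submanifold with an appropriate orientation); (2) (F_∇^S)³/6 + F_∇^S ∧ *₇φ = 0 at every point of B; (3) (F_∇^S)³/6 + F_∇^S ∧ *₇φ = 0 and φ ∧ *₇((F_∇^S)²) = 0 at every point of B. -/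
open scoped BigOperators

noncomputable section

namespace FMpaper

variable {K : Type*} [NormedField K] [NormedAlgebra ℝ K]

/-- Coefficient model for the exterior algebra of `(ℝⁿ)*` with scalars in `K`:
a form is given by its coefficients on the basis `e^S`, `S ⊆ {0, …, n-1}` sorted. -/
abbrev Form (K : Type*) (n : ℕ) := Finset (Fin n) → K

variable {n : ℕ}

/-- Sign such that `e^s ∧ e^t = signMerge s t • e^(s ∪ t)` for disjoint sorted `s, t`. -/
def signMerge (s t : Finset (Fin n)) : K :=
  (-1 : K) ^ (((s ×ˢ t).filter (fun p => p.2 < p.1)).card)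

/-- Wedge product. -/
def wedge (α β : Form K n) : Form K n :=
  fun u => ∑ s ∈ u.powerset, signMerge s (u \ s) * α s * β (u \ s)

/-- Hodge star operator (for the standard inner product and orientation `e^{0⋯(n-1)}`). -/
def hstar (α : Form K n) : Form K n :=
  fun t => signMerge tᶜ t * α tᶜ

/-- Interior product with the basis vector `e_μ`. -/
def iprodB (μ : Fin n) (α : Form K n) : Form K n :=
  fun t => if μ ∈ t then 0
    else (-1 : K) ^ ((t.filter (fun j => j < μ)).card) * α (insert μ t)

/-- Interior product with the vector `v`. -/
def iprod (v : Fin n → K) (α : Form K n) : Form K n :=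
  fun t => ∑ μ, v μ * iprodB μ α t

/-- The basis covector `e^i` as a 1-form. -/
def e1 (i : Fin n) : Form K n := fun s => if s = {i} then 1 else 0

/-- The covector `v♭` dual to a vector `v`. -/
def flat (v : Fin n → K) : Form K n := ∑ i, v i • e1 i

/-- The vector `α♯` dual to a 1-form `α`. -/
def sharp1 (α : Form K n) : Fin n → K := fun i => α {i}

/-- The inner product of forms (extended `K`-bilinearly). -/
def inner' (α β : Form K n) : K := ∑ s, α s * β s

/-- The (Euclidean) norm of a form; for an `√-1 ℝ`-valued form `√-1 γ` this is `‖γ‖`. -/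
def fnorm (α : Form K n) : ℝ := Real.sqrt (∑ s, ‖α s‖ ^ 2)

/-- `α` is homogeneous of degree `k`. -/
def isGrade (k : ℕ) (α : Form K n) : Prop := ∀ s, s.card ≠ k → α s = 0

/-- Evaluation of a `k`-form on `k` vectors. -/
def evalForm {k : ℕ} (α : Form K n) (v : Fin k → (Fin n → K)) : K :=
  ∑ s : Finset (Fin n), α s *
    (if h : s.card = k then
      Matrix.det (Matrix.of fun i j => v i ((s.orderIsoOfFin h j : Fin n))) else 0)

/-- The matrix of the skew-symmetric endomorphism `γ♯` associated with a 2-form `γ`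
via `⟨γ♯ u, v⟩ = γ(u, v)`. -/
def mat2 (γ : Form K n) : Matrix (Fin n) (Fin n) K :=
  Matrix.of fun i j => if i < j then γ {i, j} else if j < i then - γ {i, j} else 0

/-- The standard `G₂` 3-form `φ = e^{123}+e^{145}+e^{167}+e^{246}−e^{257}−e^{347}−e^{356}`
on `ℝ⁷` (indices `1, …, 7` shifted to `0, …, 6`). -/
def phi7 : Form K 7 := fun s =>
  if s = ({0, 1, 2} : Finset (Fin 7)) then 1
  else if s = ({0, 3, 4} : Finset (Fin 7)) then 1
  else if s = ({0, 5, 6} : Finset (Fin 7)) then 1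
  else if s = ({1, 3, 5} : Finset (Fin 7)) then 1
  else if s = ({1, 4, 6} : Finset (Fin 7)) then -1
  else if s = ({2, 3, 6} : Finset (Fin 7)) then -1
  else if s = ({2, 4, 5} : Finset (Fin 7)) then -1
  else 0

/-- `*₇φ = e^{4567}+e^{2367}+e^{2345}+e^{1357}−e^{1346}−e^{1256}−e^{1247}` on `ℝ⁷`. -/
def psi7 : Form K 7 := fun s =>
  if s = ({3, 4, 5, 6} : Finset (Fin 7)) then 1
  else if s = ({1, 2, 5, 6} : Finset (Fin 7)) then 1
  else if s = ({1, 2, 3, 4} : Finset (Fin 7)) then 1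
  else if s = ({0, 2, 4, 6} : Finset (Fin 7)) then 1
  else if s = ({0, 2, 3, 5} : Finset (Fin 7)) then -1
  else if s = ({0, 1, 4, 5} : Finset (Fin 7)) then -1
  else if s = ({0, 1, 3, 6} : Finset (Fin 7)) then -1
  else 0

/-- The `G₂` 3-form `φ` on `V = span{e₁, …, e₇} ⊂ ℝ⁸`, regarded as a form on `ℝ⁸`
annihilated by `i(e₀)` (indices `1, …, 7` of `ℝ⁸`). -/
def phi8 : Form K 8 := fun s =>
  if s = ({1, 2, 3} : Finset (Fin 8)) then 1
  else if s = ({1, 4, 5} : Finset (Fin 8)) then 1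
  else if s = ({1, 6, 7} : Finset (Fin 8)) then 1
  else if s = ({2, 4, 6} : Finset (Fin 8)) then 1
  else if s = ({2, 5, 7} : Finset (Fin 8)) then -1
  else if s = ({3, 4, 7} : Finset (Fin 8)) then -1
  else if s = ({3, 5, 6} : Finset (Fin 8)) then -1
  else 0

/-- `*₇φ` on `V ⊂ ℝ⁸`, regarded as a 4-form on `ℝ⁸` annihilated by `i(e₀)`. -/
def psi8 : Form K 8 := fun s =>
  if s = ({4, 5, 6, 7} : Finset (Fin 8)) then 1
  else if s = ({2, 3, 6, 7} : Finset (Fin 8)) then 1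
  else if s = ({2, 3, 4, 5} : Finset (Fin 8)) then 1
  else if s = ({1, 3, 5, 7} : Finset (Fin 8)) then 1
  else if s = ({1, 3, 4, 6} : Finset (Fin 8)) then -1
  else if s = ({1, 2, 5, 6} : Finset (Fin 8)) then -1
  else if s = ({1, 2, 4, 7} : Finset (Fin 8)) then -1
  else 0

/-- The standard Cayley 4-form `Φ = e⁰ ∧ φ + *₇φ` on `ℝ⁸`. -/
def Phi8 : Form K 8 := wedge (e1 0) phi8 + psi8

/-- The index set of `V = span{e₁, …, e₇} ⊂ ℝ⁸`. -/
def Vset : Finset (Fin 8) := {1, 2, 3, 4, 5, 6, 7}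

/-- The Hodge star `*₇` of `V ⊂ ℝ⁸` (volume form `e^{1⋯7}`), acting on forms on `ℝ⁸`
annihilated by `i(e₀)`. -/
def star7 (α : Form K 8) : Form K 8 :=
  fun t => if (0 : Fin 8) ∈ t then 0 else signMerge (Vset \ t) t * α (Vset \ t)

/-- `α` is (the pullback of) a form on `V`, i.e. `i(e₀) α = 0`. -/
def onV (α : Form K 8) : Prop := ∀ s, (0 : Fin 8) ∈ s → α s = 0

/-- `λ²(α) = ½ (e⁰ ∧ α + i(α♯) φ)` for `α ∈ V*`. -/
def lambda2 (α : Form K 8) : Form K 8 :=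
  (2 : K)⁻¹ • (wedge (e1 0) α + iprod (sharp1 α) phi8)

/-- `λ⁴(α) = (1/√8) (e⁰ ∧ i(α♯) *₇φ − α ∧ φ)` for `α ∈ V*`. -/
def lambda4 (α : Form K 8) : Form K 8 :=
  (algebraMap ℝ K (Real.sqrt 8))⁻¹ • (wedge (e1 0) (iprod (sharp1 α) psi8) - wedge α phi8)

/-- `λ⁶(α) = *₈ λ²(α)` for `α ∈ V*`. -/
def lambda6 (α : Form K 8) : Form K 8 := hstar (lambda2 α)

/-- The projection `π²₇(α) = (α + *₈(Φ ∧ α))/4` onto `Λ²₇`. -/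
def pi27 (α : Form K 8) : Form K 8 := (4 : K)⁻¹ • (α + hstar (wedge Phi8 α))

/-- The projection `π⁴₇(β) = Σ_{μ=1}^{7} ⟨β, λ⁴(e^μ)⟩ λ⁴(e^μ)` onto `Λ⁴₇`. -/
def pi47 (β : Form K 8) : Form K 8 :=
  ∑ μ : Fin 7, inner' β (lambda4 (e1 μ.succ)) • lambda4 (e1 μ.succ)

/-- `τ(u₀,u₁,u₂,u₃) = Σ_{μ=1}^{7} λ⁴(e^μ)(u₀,u₁,u₂,u₃) ⬝ λ⁴(e^μ) = π⁴₇(u₀♭∧u₁♭∧u₂♭∧u₃♭)`. -/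
def tau4 (u : Fin 4 → (Fin 8 → K)) : Form K 8 :=
  ∑ μ : Fin 7, evalForm (lambda4 (e1 μ.succ)) u • lambda4 (e1 μ.succ)

/-- Partial derivative `∂f^a/∂x^j` at `x`. -/
def pd {m p : ℕ} (f : (Fin m → ℝ) → (Fin p → ℝ)) (x : Fin m → ℝ) (j : Fin m) (a : Fin p) : ℝ :=
  fderiv ℝ f x (Pi.single j 1) a


/-! Graph setting for associative `T³`-fibrations: `ℝ⁷ = ℝ⁴ × ℝ³` with coordinates
`(y⁴,…,y⁷,x¹,x²,x³)`, where `dx¹,dx²,dx³,dy⁴,…,dy⁷` is the dual basis `e¹,…,e⁷`. -/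

/-- The index of the coordinate `x^j` (`j = 1,2,3` shifted to `0,1,2`) in `ℝ⁷`. -/
def xj (j : Fin 3) : Fin 7 := Fin.castAdd 4 j

/-- The index of the coordinate `y^a` (`a = 4,…,7` shifted to `0,…,3`) in `ℝ⁷`. -/
def ya (a : Fin 4) : Fin 7 := a.addNat 3

/-- The spanning tangent vectors `w_a = ∂_a + Σ_j (∂f^j/∂y^a) ∂_j` of the graph of `f`. -/
def wC (f : (Fin 4 → ℝ) → (Fin 3 → ℝ)) (y : Fin 4 → ℝ) (a : Fin 4) : Fin 7 → ℝ :=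
  Pi.single (ya a) 1 + ∑ j : Fin 3, pd f y a j • (Pi.single (xj j) 1 : Fin 7 → ℝ)

/-- The real 2-form `γ` with `F_∇^S = √-1 γ`, i.e. `γ = Σ_{j,a} (∂f^j/∂y^a) dy^a ∧ dx^j`. -/
def gammaC (f : (Fin 4 → ℝ) → (Fin 3 → ℝ)) (y : Fin 4 → ℝ) : Form ℝ 7 :=
  ∑ j : Fin 3, ∑ a : Fin 4, pd f y a j • wedge (e1 (ya a)) (e1 (xj j))

/-- The `√-1 ℝ`-valued curvature 2-form
`F_∇^S = √-1 Σ_{j,a} (∂f^j/∂y^a) dy^a ∧ dx^j` of the real Fourier–Mukai transform. -/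
def FSC (f : (Fin 4 → ℝ) → (Fin 3 → ℝ)) (y : Fin 4 → ℝ) : Form ℂ 7 :=
  fun s => Complex.I * (gammaC f y s : ℂ)

set_option linter.unusedSectionVars false

/-- Mixed 2-form with coefficient matrix `A`. -/
def GG (A : Fin 3 → Fin 4 → K) : Form K 7 :=
  fun s => ∑ j : Fin 3, ∑ a : Fin 4, if s = {xj j, ya a} then - A j a else 0

lemma signMerge_eq (s t : Finset (Fin n)) : (signMerge s t : K) =
    if (((s ×ˢ t).filter (fun p => p.2 < p.1)).card) % 2 = 0 then 1 else -1 := by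
  unfold signMerge
  split_ifs with h
  · exact (Nat.even_iff.mpr h).neg_one_pow
  · exact (Nat.odd_iff.mpr (by omega)).neg_one_pow

lemma wedge_e1 (p q : Fin n) (h : p ≠ q) (u : Finset (Fin n)) :
    wedge (e1 p) (e1 q : Form K n) u = if u = {p, q} then signMerge {p} {q} else 0 := by
  unfold wedge e1
  split_ifs with hu
  · subst hu
    have h1 : ({p, q} : Finset (Fin n)) \ {p} = {q} := by
      ext x; simp only [Finset.mem_sdiff, Finset.mem_insert, Finset.mem_singleton]
      constructor
      · tauto
      · rintro rfl; exact ⟨Or.inr rfl, h.symm⟩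
    rw [Finset.sum_eq_single {p}]
    · simp [h1]
    · intro b _ hb; simp [hb]
    · intro hh; exact absurd (by simp) hh
  · apply Finset.sum_eq_zero
    intro s hs
    rw [Finset.mem_powerset] at hs
    by_cases h1 : s = {p}
    · have : u \ s ≠ {q} := by
        intro h2
        apply hu
        rw [← Finset.sdiff_union_of_subset hs, h2, h1]
        ext x; simp [or_comm]
      simp [this]
    · simp [h1]

lemma gammaC_eq (f : (Fin 4 → ℝ) → (Fin 3 → ℝ)) (y : Fin 4 → ℝ) :
    gammaC f y = GG (fun j a => pd f y a j) := by
  funext s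
  unfold gammaC GG
  simp only [Finset.sum_apply, Pi.smul_apply, smul_eq_mul]
  refine Finset.sum_congr rfl fun j _ => Finset.sum_congr rfl fun a _ => ?_
  have hne : ya a ≠ xj j := by revert a j; decide
  have hs : (signMerge {ya a} {xj j} : ℝ) = -1 := by
    rw [signMerge_eq, if_neg (by revert a j; decide)]
  rw [wedge_e1 _ _ hne, hs, Finset.pair_comm (ya a)]
  split_ifs <;> simp

lemma FSC_eq (f : (Fin 4 → ℝ) → (Fin 3 → ℝ)) (y : Fin 4 → ℝ) :
    FSC f y = GG (fun j a => Complex.I * (pd f y a j : ℂ)) := by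
  funext s
  unfold FSC
  rw [gammaC_eq]
  unfold GG
  push_cast
  simp only [Finset.mul_sum]
  refine Finset.sum_congr rfl fun j _ => Finset.sum_congr rfl fun a _ => ?_
  split_ifs <;> simp

lemma wedge_GG (A : Fin 3 → Fin 4 → K) (β : Form K 7) (u : Finset (Fin 7)) :
    wedge (GG A) β u = ∑ j : Fin 3, ∑ a : Fin 4, if {xj j, ya a} ⊆ u then
      signMerge {xj j, ya a} (u \ {xj j, ya a}) * (- A j a) * β (u \ {xj j, ya a}) else 0 := by
  unfold wedge GG
  simp only [Finset.mul_sum, Finset.sum_mul]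
  rw [Finset.sum_comm]
  refine Finset.sum_congr rfl fun j _ => ?_
  rw [Finset.sum_comm]
  refine Finset.sum_congr rfl fun a _ => ?_
  split_ifs with h
  · rw [Finset.sum_eq_single {xj j, ya a}]
    · simp
    · intro b _ hb; simp [hb]
    · intro hh; exact absurd (Finset.mem_powerset.mpr h) hh
  · apply Finset.sum_eq_zero
    intro s hs
    rw [if_neg]
    · simp
    · rintro rfl; exact h (Finset.mem_powerset.mp hs)

/-- number of x indices -/
def nx (s : Finset (Fin 7)) : ℕ := (s.filter (fun i => i < 3)).card
/-- number of y indices -/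
def ny (s : Finset (Fin 7)) : ℕ := (s.filter (fun i => ¬ i < 3)).card

lemma nx_add {s u : Finset (Fin 7)} (h : s ⊆ u) : nx s + nx (u \ s) = nx u := by
  unfold nx
  rw [← Finset.card_union_of_disjoint, ← Finset.filter_union, Finset.union_sdiff_of_subset h]
  exact Finset.disjoint_filter_filter Finset.disjoint_sdiff

lemma ny_add {s u : Finset (Fin 7)} (h : s ⊆ u) : ny s + ny (u \ s) = ny u := by
  unfold ny
  rw [← Finset.card_union_of_disjoint, ← Finset.filter_union, Finset.union_sdiff_of_subset h]
  exact Finset.disjoint_filter_filter Finset.disjoint_sdiff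

lemma wedge_ne {α β : Form K n} {u : Finset (Fin n)} (h : wedge α β u ≠ 0) :
    ∃ s ⊆ u, α s ≠ 0 ∧ β (u \ s) ≠ 0 := by
  by_contra hc
  apply h
  unfold wedge
  apply Finset.sum_eq_zero
  intro s hs
  rw [Finset.mem_powerset] at hs
  by_cases h1 : α s = 0
  · simp [h1]
  · have : β (u \ s) = 0 := by
      by_contra h2; exact hc ⟨s, hs, h1, h2⟩
    simp [this]

lemma GG_ne {A : Fin 3 → Fin 4 → K} {s : Finset (Fin 7)} (h : GG A s ≠ 0) :
    nx s = 1 ∧ ny s = 1 := by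
  obtain ⟨j, _, h⟩ := Finset.exists_ne_zero_of_sum_ne_zero h
  obtain ⟨a, _, h⟩ := Finset.exists_ne_zero_of_sum_ne_zero h
  have : s = {xj j, ya a} := by
    by_contra hs; exact h (if_neg hs)
  subst this
  have key : ∀ (j : Fin 3) (a : Fin 4), nx {xj j, ya a} = 1 ∧ ny {xj j, ya a} = 1 := by decide
  exact key j a

lemma psi_ne {s : Finset (Fin 7)} (h : (psi7 s : K) ≠ 0) :
    (nx s = 0 ∧ ny s = 4) ∨ (nx s = 2 ∧ ny s = 2) := by
  unfold psi7 at h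
  split_ifs at h <;> first | (subst s; decide) | exact absurd rfl h

lemma phi_ne {s : Finset (Fin 7)} (h : (phi7 s : K) ≠ 0) :
    (nx s = 3 ∧ ny s = 0) ∨ (nx s = 1 ∧ ny s = 2) := by
  unfold phi7 at h
  split_ifs at h <;> first | (subst s; decide) | exact absurd rfl h

set_option maxRecDepth 100000 in
lemma n_le : ∀ s : Finset (Fin 7), nx s ≤ 3 ∧ ny s ≤ 4 ∧ nx sᶜ = 3 - nx s ∧ ny sᶜ = 4 - ny s := by
  decide

set_option maxRecDepth 100000 in
lemma cls33 : ∀ s : Finset (Fin 7), nx s = 3 ∧ ny s = 3 →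
    s = {0,1,2,3,4,5} ∨ s = {0,1,2,3,4,6} ∨ s = {0,1,2,3,5,6} ∨ s = {0,1,2,4,5,6} := by
  decide

set_option maxRecDepth 100000 in
lemma cls24 : ∀ s : Finset (Fin 7), nx s = 2 ∧ ny s = 4 →
    s = {0,1,3,4,5,6} ∨ s = {0,2,3,4,5,6} ∨ s = {1,2,3,4,5,6} := by
  decide

lemma supp_cubic (A : Fin 3 → Fin 4 → K) (u : Finset (Fin 7))
    (h : wedge (GG A) (wedge (GG A) (GG A)) u ≠ 0) : nx u = 3 ∧ ny u = 3 := by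
  obtain ⟨s, hs, h1, h2⟩ := wedge_ne h
  obtain ⟨t, ht, h3, h4⟩ := wedge_ne h2
  have := GG_ne h1; have := GG_ne h3; have := GG_ne h4
  have := nx_add hs; have := ny_add hs; have := nx_add ht; have := ny_add ht
  omega

lemma supp_psi (A : Fin 3 → Fin 4 → K) (u : Finset (Fin 7))
    (h : wedge (GG A) psi7 u ≠ 0) : nx u = 3 ∧ ny u = 3 := by
  obtain ⟨s, hs, h1, h2⟩ := wedge_ne h
  have := GG_ne h1; have := psi_ne h2
  have := nx_add hs; have := ny_add hs; have := n_le u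
  omega

lemma supp_phi (A : Fin 3 → Fin 4 → K) (u : Finset (Fin 7))
    (h : wedge phi7 (hstar (wedge (GG A) (GG A))) u ≠ 0) : nx u = 2 ∧ ny u = 4 := by
  obtain ⟨s, hs, h1, h2⟩ := wedge_ne h
  have h2 : wedge (GG A) (GG A) (u \ s)ᶜ ≠ 0 := by
    intro h0; apply h2; unfold hstar; rw [h0, mul_zero]
  obtain ⟨t, ht, h3, h4⟩ := wedge_ne h2
  have := phi_ne h1; have := GG_ne h3; have := GG_ne h4
  have := nx_add hs; have := ny_add hs; have := nx_add ht; have := ny_add ht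
  have := n_le u; have := n_le (u \ s)
  omega

/-- 3x3 minors. -/
def DD (A : Fin 3 → Fin 4 → ℝ) (a b c : Fin 4) : ℝ :=
  A 0 a * (A 1 b * A 2 c - A 1 c * A 2 b) - A 0 b * (A 1 a * A 2 c - A 1 c * A 2 a)
    + A 0 c * (A 1 a * A 2 b - A 1 b * A 2 a)

/-- the cubic equation -/
def P012 (A : Fin 3 → Fin 4 → ℝ) : ℝ := -A 0 2 + A 1 1 + A 2 0 - DD A 0 1 2

lemma comp012 (A : Fin 3 → Fin 4 → ℝ) :
    ((6 : ℂ)⁻¹ • wedge (GG fun j a => Complex.I * (A j a : ℂ)) (wedge (GG fun j a => Complex.I * (A j a : ℂ))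
      (GG fun j a => Complex.I * (A j a : ℂ))) + wedge (GG fun j a => Complex.I * (A j a : ℂ)) psi7)
      {0,1,2,3,4,5} = Complex.I * (P012 A : ℂ) := by
  simp only [Pi.add_apply, Pi.smul_apply, smul_eq_mul]
  simp (decide := true) only [wedge_GG, Fin.sum_univ_three, Fin.sum_univ_four, GG, psi7, signMerge_eq,
    if_true, if_false, mul_zero, zero_add, add_zero]
  unfold P012 DD
  push_cast
  ring_nf
  simp only [Complex.I_pow_three]
  ring

/-- the cubic equation -/
def P013 (A : Fin 3 → Fin 4 → ℝ) : ℝ := -A 0 3 + A 1 0 - A 2 1 - DD A 0 1 3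

lemma comp013 (A : Fin 3 → Fin 4 → ℝ) :
    ((6 : ℂ)⁻¹ • wedge (GG fun j a => Complex.I * (A j a : ℂ)) (wedge (GG fun j a => Complex.I * (A j a : ℂ))
      (GG fun j a => Complex.I * (A j a : ℂ))) + wedge (GG fun j a => Complex.I * (A j a : ℂ)) psi7)
      {0,1,2,3,4,6} = Complex.I * (P013 A : ℂ) := by
  simp only [Pi.add_apply, Pi.smul_apply, smul_eq_mul]
  simp (decide := true) only [wedge_GG, Fin.sum_univ_three, Fin.sum_univ_four, GG, psi7, signMerge_eq,
    if_true, if_false, mul_zero, zero_add, add_zero]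
  unfold P013 DD
  push_cast
  ring_nf
  simp only [Complex.I_pow_three]
  ring

/-- the cubic equation -/
def P023 (A : Fin 3 → Fin 4 → ℝ) : ℝ := -A 0 0 - A 1 3 - A 2 2 - DD A 0 2 3

lemma comp023 (A : Fin 3 → Fin 4 → ℝ) :
    ((6 : ℂ)⁻¹ • wedge (GG fun j a => Complex.I * (A j a : ℂ)) (wedge (GG fun j a => Complex.I * (A j a : ℂ))
      (GG fun j a => Complex.I * (A j a : ℂ))) + wedge (GG fun j a => Complex.I * (A j a : ℂ)) psi7)
      {0,1,2,3,5,6} = Complex.I * (P023 A : ℂ) := by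
  simp only [Pi.add_apply, Pi.smul_apply, smul_eq_mul]
  simp (decide := true) only [wedge_GG, Fin.sum_univ_three, Fin.sum_univ_four, GG, psi7, signMerge_eq,
    if_true, if_false, mul_zero, zero_add, add_zero]
  unfold P023 DD
  push_cast
  ring_nf
  simp only [Complex.I_pow_three]
  ring

/-- the cubic equation -/
def P123 (A : Fin 3 → Fin 4 → ℝ) : ℝ := -A 0 1 - A 1 2 + A 2 3 - DD A 1 2 3

lemma comp123 (A : Fin 3 → Fin 4 → ℝ) :
    ((6 : ℂ)⁻¹ • wedge (GG fun j a => Complex.I * (A j a : ℂ)) (wedge (GG fun j a => Complex.I * (A j a : ℂ))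
      (GG fun j a => Complex.I * (A j a : ℂ))) + wedge (GG fun j a => Complex.I * (A j a : ℂ)) psi7)
      {0,1,2,4,5,6} = Complex.I * (P123 A : ℂ) := by
  simp only [Pi.add_apply, Pi.smul_apply, smul_eq_mul]
  simp (decide := true) only [wedge_GG, Fin.sum_univ_three, Fin.sum_univ_four, GG, psi7, signMerge_eq,
    if_true, if_false, mul_zero, zero_add, add_zero]
  unfold P123 DD
  push_cast
  ring_nf
  simp only [Complex.I_pow_three]
  ring

/-- monomials of phi -/
def PS : Fin 7 → Finset (Fin 7) :=
  ![{0,1,2}, {0,3,4}, {0,5,6}, {1,3,5}, {1,4,6}, {2,3,6}, {2,4,5}]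

/-- coefficients of phi -/
def PC : Fin 7 → K := ![1, 1, 1, 1, -1, -1, -1]

lemma phi7_eq (s : Finset (Fin 7)) : (phi7 s : K) = ∑ i : Fin 7, if s = PS i then PC i else 0 := by
  by_cases h : ∃ i, s = PS i
  · obtain ⟨i, rfl⟩ := h
    rw [Finset.sum_eq_single i]
    · rw [if_pos rfl]
      fin_cases i <;> simp (decide := true) only [phi7, PS, if_true, if_false] <;> rfl
    · intro b _ hb
      rw [if_neg]
      revert i b
      decide
    · simp
  · push Not at h
    rw [Finset.sum_eq_zero fun i _ => if_neg (h i)]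
    unfold phi7
    exact (if_neg (h 0)).trans <| (if_neg (h 1)).trans <| (if_neg (h 2)).trans <| (if_neg (h 3)).trans <|
      (if_neg (h 4)).trans <| (if_neg (h 5)).trans <| if_neg (h 6)

lemma wedge_phi (β : Form K 7) (u : Finset (Fin 7)) :
    wedge phi7 β u = ∑ i : Fin 7, if PS i ⊆ u then
      signMerge (PS i) (u \ PS i) * PC i * β (u \ PS i) else 0 := by
  unfold wedge
  simp only [phi7_eq, Finset.mul_sum, Finset.sum_mul]
  rw [Finset.sum_comm]
  refine Finset.sum_congr rfl fun i _ => ?_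
  split_ifs with h
  · rw [Finset.sum_eq_single (PS i)]
    · simp
    · intro b _ hb; simp [hb]
    · intro hh; exact absurd (Finset.mem_powerset.mpr h) hh
  · apply Finset.sum_eq_zero
    intro s hs
    rw [if_neg]
    · simp
    · rintro rfl; exact h (Finset.mem_powerset.mp hs)

lemma quad2 (A : Fin 3 → Fin 4 → ℝ) :
    wedge phi7 (hstar (wedge (GG fun j a => Complex.I * (A j a : ℂ)) (GG fun j a => Complex.I * (A j a : ℂ))))
      {0,1,3,4,5,6} = ((2 * (P012 A * A 2 3 - P013 A * A 2 2 + P023 A * A 2 1 - P123 A * A 2 0) : ℝ) : ℂ) := by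
  rw [wedge_phi, Fin.sum_univ_seven]
  simp (decide := true) only [PS, PC, hstar, wedge_GG, Fin.sum_univ_three, Fin.sum_univ_four, GG, signMerge_eq,
    if_true, if_false, mul_zero, zero_add, add_zero, Matrix.cons_val]
  unfold P012 P013 P023 P123 DD
  push_cast
  ring_nf
  simp only [Complex.I_sq]
  ring

lemma quad1 (A : Fin 3 → Fin 4 → ℝ) :
    wedge phi7 (hstar (wedge (GG fun j a => Complex.I * (A j a : ℂ)) (GG fun j a => Complex.I * (A j a : ℂ))))
      {0,2,3,4,5,6} = ((-2 * (P012 A * A 1 3 - P013 A * A 1 2 + P023 A * A 1 1 - P123 A * A 1 0) : ℝ) : ℂ) := by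
  rw [wedge_phi, Fin.sum_univ_seven]
  simp (decide := true) only [PS, PC, hstar, wedge_GG, Fin.sum_univ_three, Fin.sum_univ_four, GG, signMerge_eq,
    if_true, if_false, mul_zero, zero_add, add_zero, Matrix.cons_val]
  unfold P012 P013 P023 P123 DD
  push_cast
  ring_nf
  simp only [Complex.I_sq]
  ring

lemma quad0 (A : Fin 3 → Fin 4 → ℝ) :
    wedge phi7 (hstar (wedge (GG fun j a => Complex.I * (A j a : ℂ)) (GG fun j a => Complex.I * (A j a : ℂ))))
      {1,2,3,4,5,6} = ((2 * (P012 A * A 0 3 - P013 A * A 0 2 + P023 A * A 0 1 - P123 A * A 0 0) : ℝ) : ℂ) := by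
  rw [wedge_phi, Fin.sum_univ_seven]
  simp (decide := true) only [PS, PC, hstar, wedge_GG, Fin.sum_univ_three, Fin.sum_univ_four, GG, signMerge_eq,
    if_true, if_false, mul_zero, zero_add, add_zero, Matrix.cons_val]
  unfold P012 P013 P023 P123 DD
  push_cast
  ring_nf
  simp only [Complex.I_sq]
  ring

lemma orderIso_three (s : Finset (Fin 7)) (h : s.card = 3) (g : Fin 3 → Fin 7) (hg : StrictMono g)
    (hs : ∀ i, g i ∈ s) (j : Fin 3) : (s.orderIsoOfFin h j : Fin 7) = g j := by
  rw [Finset.coe_orderIsoOfFin_apply, ← Finset.orderEmbOfFin_unique h hs hg]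

/-- increasing enumeration of the monomials -/
def PG : Fin 7 → Fin 3 → Fin 7 :=
  ![![0,1,2], ![0,3,4], ![0,5,6], ![1,3,5], ![1,4,6], ![2,3,6], ![2,4,5]]

lemma PG_mono : ∀ i, StrictMono (PG i) := by unfold StrictMono; decide
lemma PG_mem : ∀ i j, PG i j ∈ PS i := by decide
lemma PS_card : ∀ i, (PS i).card = 3 := by decide

lemma evalForm_phi (v : Fin 3 → (Fin 7 → ℝ)) : evalForm phi7 v =
    ∑ i : Fin 7, PC i * Matrix.det (Matrix.of fun a b => v a (PG i b)) := by
  unfold evalForm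
  simp only [phi7_eq, Finset.sum_mul]
  rw [Finset.sum_comm]
  refine Finset.sum_congr rfl fun i _ => ?_
  rw [Finset.sum_eq_single (PS i)]
  · rw [if_pos rfl, dif_pos (PS_card i)]
    simp only [orderIso_three _ (PS_card i) (PG i) (PG_mono i) (PG_mem i)]
  · intro b _ hb; simp [hb]
  · simp

lemma wC_val (f : (Fin 4 → ℝ) → (Fin 3 → ℝ)) (y : Fin 4 → ℝ) (a : Fin 4) :
    wC f y a = ![pd f y a 0, pd f y a 1, pd f y a 2, if a = 0 then 1 else 0, if a = 1 then 1 else 0,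
      if a = 2 then 1 else 0, if a = 3 then 1 else 0] := by
  funext i
  unfold wC
  simp only [Fin.sum_univ_three, Pi.add_apply, Pi.smul_apply, smul_eq_mul, Pi.single_apply]
  fin_cases i <;> fin_cases a <;> simp (decide := true) [xj, ya]

lemma eval012 (f : (Fin 4 → ℝ) → (Fin 3 → ℝ)) (y : Fin 4 → ℝ) :
    evalForm phi7 ![wC f y 0, wC f y 1, wC f y 2] = - P012 (fun j a => pd f y a j) := by
  rw [evalForm_phi, Fin.sum_univ_seven]
  simp (decide := true) only [PC, PG, Matrix.det_fin_three, Matrix.of_apply, wC_val, Matrix.cons_val,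
    if_true, if_false]
  unfold P012 DD
  ring

lemma eval013 (f : (Fin 4 → ℝ) → (Fin 3 → ℝ)) (y : Fin 4 → ℝ) :
    evalForm phi7 ![wC f y 0, wC f y 1, wC f y 3] = - P013 (fun j a => pd f y a j) := by
  rw [evalForm_phi, Fin.sum_univ_seven]
  simp (decide := true) only [PC, PG, Matrix.det_fin_three, Matrix.of_apply, wC_val, Matrix.cons_val,
    if_true, if_false]
  unfold P013 DD
  ring

lemma eval023 (f : (Fin 4 → ℝ) → (Fin 3 → ℝ)) (y : Fin 4 → ℝ) :
    evalForm phi7 ![wC f y 0, wC f y 2, wC f y 3] = - P023 (fun j a => pd f y a j) := by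
  rw [evalForm_phi, Fin.sum_univ_seven]
  simp (decide := true) only [PC, PG, Matrix.det_fin_three, Matrix.of_apply, wC_val, Matrix.cons_val,
    if_true, if_false]
  unfold P023 DD
  ring

lemma eval123 (f : (Fin 4 → ℝ) → (Fin 3 → ℝ)) (y : Fin 4 → ℝ) :
    evalForm phi7 ![wC f y 1, wC f y 2, wC f y 3] = - P123 (fun j a => pd f y a j) := by
  rw [evalForm_phi, Fin.sum_univ_seven]
  simp (decide := true) only [PC, PG, Matrix.det_fin_three, Matrix.of_apply, wC_val, Matrix.cons_val,
    if_true, if_false]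
  unfold P123 DD
  ring

lemma cond1 (f : (Fin 4 → ℝ) → (Fin 3 → ℝ)) (y : Fin 4 → ℝ) :
    (∀ a b c : Fin 4, a < b → b < c → evalForm phi7 ![wC f y a, wC f y b, wC f y c] = 0) ↔
    (P012 (fun j a => pd f y a j) = 0 ∧ P013 (fun j a => pd f y a j) = 0 ∧
      P023 (fun j a => pd f y a j) = 0 ∧ P123 (fun j a => pd f y a j) = 0) := by
  constructor
  · intro h
    have h1 := h 0 1 2 (by decide) (by decide)
    have h2 := h 0 1 3 (by decide) (by decide)
    have h3 := h 0 2 3 (by decide) (by decide)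
    have h4 := h 1 2 3 (by decide) (by decide)
    rw [eval012, neg_eq_zero] at h1
    rw [eval013, neg_eq_zero] at h2
    rw [eval023, neg_eq_zero] at h3
    rw [eval123, neg_eq_zero] at h4
    exact ⟨h1, h2, h3, h4⟩
  · rintro ⟨h1, h2, h3, h4⟩ a b c hab hbc
    have key : ∀ a b c : Fin 4, a < b → b < c → (a = 0 ∧ b = 1 ∧ c = 2) ∨ (a = 0 ∧ b = 1 ∧ c = 3) ∨
      (a = 0 ∧ b = 2 ∧ c = 3) ∨ (a = 1 ∧ b = 2 ∧ c = 3) := by decide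
    rcases key a b c hab hbc with ⟨rfl, rfl, rfl⟩ | ⟨rfl, rfl, rfl⟩ | ⟨rfl, rfl, rfl⟩ | ⟨rfl, rfl, rfl⟩
    · rw [eval012, h1, neg_zero]
    · rw [eval013, h2, neg_zero]
    · rw [eval023, h3, neg_zero]
    · rw [eval123, h4, neg_zero]

lemma cond2 (f : (Fin 4 → ℝ) → (Fin 3 → ℝ)) (y : Fin 4 → ℝ) :
    ((6 : ℂ)⁻¹ • wedge (FSC f y) (wedge (FSC f y) (FSC f y)) + wedge (FSC f y) psi7 = 0) ↔
    (P012 (fun j a => pd f y a j) = 0 ∧ P013 (fun j a => pd f y a j) = 0 ∧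
      P023 (fun j a => pd f y a j) = 0 ∧ P123 (fun j a => pd f y a j) = 0) := by
  rw [FSC_eq]
  have c1 := comp012 (fun j a => pd f y a j)
  have c2 := comp013 (fun j a => pd f y a j)
  have c3 := comp023 (fun j a => pd f y a j)
  have c4 := comp123 (fun j a => pd f y a j)
  constructor
  · intro h
    rw [h] at c1 c2 c3 c4
    have aux : ∀ x : ℝ, (0 : ℂ) = Complex.I * (x : ℂ) → x = 0 := by
      intro x hx
      rcases mul_eq_zero.mp hx.symm with h | h
      · exact absurd h Complex.I_ne_zero
      · exact_mod_cast h
    exact ⟨aux _ c1, aux _ c2, aux _ c3, aux _ c4⟩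
  · rintro ⟨h1, h2, h3, h4⟩
    funext u
    by_cases hu : nx u = 3 ∧ ny u = 3
    · rcases cls33 u hu with rfl | rfl | rfl | rfl
      · rw [c1, h1]; simp
      · rw [c2, h2]; simp
      · rw [c3, h3]; simp
      · rw [c4, h4]; simp
    · simp only [Pi.add_apply, Pi.smul_apply, smul_eq_mul, Pi.zero_apply]
      rw [not_imp_comm.mp (supp_cubic _ u) hu, not_imp_comm.mp (supp_psi _ u) hu]
      simp

lemma cond3 (f : (Fin 4 → ℝ) → (Fin 3 → ℝ)) (y : Fin 4 → ℝ)
    (h : P012 (fun j a => pd f y a j) = 0 ∧ P013 (fun j a => pd f y a j) = 0 ∧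
      P023 (fun j a => pd f y a j) = 0 ∧ P123 (fun j a => pd f y a j) = 0) :
    wedge phi7 (hstar (wedge (FSC f y) (FSC f y))) = 0 := by
  obtain ⟨h1, h2, h3, h4⟩ := h
  rw [FSC_eq]
  funext u
  by_cases hu : nx u = 2 ∧ ny u = 4
  · rcases cls24 u hu with rfl | rfl | rfl
    · rw [quad2 (fun j a => pd f y a j), h1, h2, h3, h4]; simp
    · rw [quad1 (fun j a => pd f y a j), h1, h2, h3, h4]; simp
    · rw [quad0 (fun j a => pd f y a j), h1, h2, h3, h4]; simp
  · exact not_imp_comm.mp (supp_phi _ u) hu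


/-- Proposition 6.1.  The following are equivalent:
(1) the graph `S` is coassociative with an appropriate orientation
    (the restriction of `φ` to the tangent spaces of `S` vanishes);
(2) `(F_∇^S)³/6 + F_∇^S ∧ *₇φ = 0` on `B`;
(3) `(F_∇^S)³/6 + F_∇^S ∧ *₇φ = 0` and `φ ∧ *₇((F_∇^S)²) = 0` on `B`. -/
theorem statement13 (B : Set (Fin 4 → ℝ)) (hB : IsOpen B)
    (f : (Fin 4 → ℝ) → (Fin 3 → ℝ)) (hf : ContDiffOn ℝ (⊤ : ℕ∞) f B) :
    ((∀ y ∈ B, ∀ a b c : Fin 4, a < b → b < c →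
        evalForm phi7 ![wC f y a, wC f y b, wC f y c] = 0) ↔
      (∀ y ∈ B,
        (6 : ℂ)⁻¹ • wedge (FSC f y) (wedge (FSC f y) (FSC f y)) +
          wedge (FSC f y) psi7 = 0)) ∧
    ((∀ y ∈ B, ∀ a b c : Fin 4, a < b → b < c →
        evalForm phi7 ![wC f y a, wC f y b, wC f y c] = 0) ↔
      (∀ y ∈ B,
        ((6 : ℂ)⁻¹ • wedge (FSC f y) (wedge (FSC f y) (FSC f y)) +
          wedge (FSC f y) psi7 = 0) ∧
        wedge phi7 (hstar (wedge (FSC f y) (FSC f y))) = 0)) := by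
  constructor
  · refine forall₂_congr fun y _ => ?_
    rw [cond1, cond2]
  · refine forall₂_congr fun y _ => ?_
    rw [cond1, cond2]
    exact ⟨fun h => ⟨h, cond3 f y h⟩, fun h => h.1⟩

end FMpaper
end
end

section
/- Let U ⊂ ℝ⁷ be a coassociative subspace, i.e. a 4-dimensional subspace admitting an orthonormal basis (u₁,u₂,u₃,u₄) with (*₇φ)(u₁,u₂,u₃,u₄) = 1; orient U by this basis and identify Λ²U* = {α ∈ Λ²(ℝ⁷)* : i(v)α = 0 for all v ∈ U^⊥}. Then a 2-form α ∈ Λ²U* is anti-self-dual on U (with respect to the induced metric and this orientation) if and only if α ∧ *₇φ = 0. -/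
open scoped BigOperators

noncomputable section

namespace FMpaper

variable {K : Type*} [NormedField K] [NormedAlgebra ℝ K]

variable {n : ℕ}

set_option linter.unusedSimpArgs false

theorem evalForm_support {k : ℕ} (α : Form ℝ 7) (v : Fin k → (Fin 7 → ℝ))
    (L : Finset (Finset (Fin 7))) (hL : ∀ s, s ∉ L → s.card = k → α s = 0) :
    evalForm α v = ∑ s ∈ L, α s *
    (if h : s.card = k then
      Matrix.det (Matrix.of fun i j => v i ((s.orderIsoOfFin h j : Fin 7))) else 0) := by
  unfold evalForm
  symm
  apply Finset.sum_subset (Finset.subset_univ L)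
  intro s _ hs
  split_ifs with h
  · rw [hL s hs h, zero_mul]
  · rw [mul_zero]

theorem ord_eq {k : ℕ} (s : Finset (Fin 7)) (h : s.card = k) (f : Fin k → Fin 7)
    (hf : StrictMono f) (hs : ∀ x, f x ∈ s) (j : Fin k) :
    (s.orderIsoOfFin h j : Fin 7) = f j := by
  have := Finset.orderEmbOfFin_unique h hs hf
  rw [this]; rfl

theorem det_ord {k : ℕ} (s : Finset (Fin 7)) (v : Fin k → (Fin 7 → ℝ)) (f : Fin k → Fin 7)
    (hk : s.card = k) (hf : StrictMono f) (hs : ∀ x, f x ∈ s) :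
    (if h : s.card = k then
      Matrix.det (Matrix.of fun i j => v i ((s.orderIsoOfFin h j : Fin 7))) else 0)
      = Matrix.det (Matrix.of fun i j => v i (f j)) := by
  rw [dif_pos hk]
  congr 2
  funext i j
  rw [ord_eq s hk f hf hs]

def suppPsi : Finset (Finset (Fin 7)) :=
  {{3, 4, 5, 6}, {1, 2, 5, 6}, {1, 2, 3, 4}, {0, 2, 4, 6}, {0, 2, 3, 5}, {0, 1, 4, 5}, {0, 1, 3, 6}}

theorem sum_suppPsi (f : Finset (Fin 7) → ℝ) : ∑ s ∈ suppPsi, f s =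
    f {3, 4, 5, 6} + (f {1, 2, 5, 6} + (f {1, 2, 3, 4} + (f {0, 2, 4, 6} + (f {0, 2, 3, 5} +
     (f {0, 1, 4, 5} + f {0, 1, 3, 6}))))) := by
  unfold suppPsi
  rw [Finset.sum_insert (by decide), Finset.sum_insert (by decide), Finset.sum_insert (by decide),
    Finset.sum_insert (by decide), Finset.sum_insert (by decide), Finset.sum_insert (by decide),
    Finset.sum_singleton]

theorem psi7_zero (s : Finset (Fin 7)) (hs : s ∉ suppPsi) : (psi7 s : ℝ) = 0 := by
  simp only [suppPsi, Finset.mem_insert, Finset.mem_singleton, not_or] at hs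
  obtain ⟨h1, h2, h3, h4, h5, h6, h7⟩ := hs
  simp only [psi7, h1, h2, h3, h4, h5, h6, h7, if_false]

theorem psi_v1 : (psi7 {3, 4, 5, 6} : ℝ) = 1 := by
  unfold psi7; rw [if_pos rfl]
theorem psi_v2 : (psi7 {1, 2, 5, 6} : ℝ) = 1 := by
  unfold psi7; rw [if_neg (by decide), if_pos rfl]
theorem psi_v3 : (psi7 {1, 2, 3, 4} : ℝ) = 1 := by
  unfold psi7; rw [if_neg (by decide), if_neg (by decide), if_pos rfl]
theorem psi_v4 : (psi7 {0, 2, 4, 6} : ℝ) = 1 := by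
  unfold psi7; rw [if_neg (by decide), if_neg (by decide), if_neg (by decide), if_pos rfl]
theorem psi_v5 : (psi7 {0, 2, 3, 5} : ℝ) = -1 := by
  unfold psi7
  rw [if_neg (by decide), if_neg (by decide), if_neg (by decide), if_neg (by decide), if_pos rfl]
theorem psi_v6 : (psi7 {0, 1, 4, 5} : ℝ) = -1 := by
  unfold psi7
  rw [if_neg (by decide), if_neg (by decide), if_neg (by decide), if_neg (by decide),
    if_neg (by decide), if_pos rfl]
theorem psi_v7 : (psi7 {0, 1, 3, 6} : ℝ) = -1 := by
  unfold psi7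
  rw [if_neg (by decide), if_neg (by decide), if_neg (by decide), if_neg (by decide),
    if_neg (by decide), if_neg (by decide), if_pos rfl]

/-- 4 by 4 minor. -/
def D4 (a b c d : Fin 7 → ℝ) (i j k l : Fin 7) : ℝ :=
  (a i * b j - a j * b i) * (c k * d l - c l * d k)
  - (a i * b k - a k * b i) * (c j * d l - c l * d j)
  + (a i * b l - a l * b i) * (c j * d k - c k * d j)
  + (a j * b k - a k * b j) * (c i * d l - c l * d i)
  - (a j * b l - a l * b j) * (c i * d k - c k * d i)
  + (a k * b l - a l * b k) * (c i * d j - c j * d i)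

theorem det4 (u : Fin 4 → (Fin 7 → ℝ)) (i j k l : Fin 7) :
    Matrix.det (Matrix.of fun x y => u x (![i, j, k, l] y)) =
      D4 (u 0) (u 1) (u 2) (u 3) i j k l := by
  rw [Matrix.det_succ_row_zero]
  simp [Fin.sum_univ_succ, Matrix.det_fin_three, Fin.succAbove, D4]
  ring

def Psi (a b c d : Fin 7 → ℝ) : ℝ :=
  D4 a b c d 3 4 5 6 + D4 a b c d 1 2 5 6 + D4 a b c d 1 2 3 4 + D4 a b c d 0 2 4 6
  - D4 a b c d 0 2 3 5 - D4 a b c d 0 1 4 5 - D4 a b c d 0 1 3 6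

theorem eval_psi (u : Fin 4 → (Fin 7 → ℝ)) :
    evalForm psi7 u = Psi (u 0) (u 1) (u 2) (u 3) := by
  rw [evalForm_support psi7 u suppPsi (fun s hs _ => psi7_zero s hs), sum_suppPsi]
  rw [det_ord _ u ![3, 4, 5, 6] (by decide) (by decide) (by decide),
    det_ord _ u ![1, 2, 5, 6] (by decide) (by decide) (by decide),
    det_ord _ u ![1, 2, 3, 4] (by decide) (by decide) (by decide),
    det_ord _ u ![0, 2, 4, 6] (by decide) (by decide) (by decide),
    det_ord _ u ![0, 2, 3, 5] (by decide) (by decide) (by decide),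
    det_ord _ u ![0, 1, 4, 5] (by decide) (by decide) (by decide),
    det_ord _ u ![0, 1, 3, 6] (by decide) (by decide) (by decide)]
  simp only [det4, psi_v1, psi_v2, psi_v3, psi_v4, psi_v5, psi_v6, psi_v7, Psi]
  ring

def prs : Finset (Fin 7 × Fin 7) := Finset.univ.filter (fun p => p.1 < p.2)

theorem eval2 (α : Form ℝ 7) (x y : Fin 7 → ℝ) :
    evalForm α ![x, y] = ∑ p ∈ prs, α {p.1, p.2} * (x p.1 * y p.2 - x p.2 * y p.1) := by
  rw [evalForm_support α ![x, y] (prs.image (fun p => ({p.1, p.2} : Finset (Fin 7))))]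
  · rw [Finset.sum_image]
    · apply Finset.sum_congr rfl
      rintro ⟨i, j⟩ hp
      have hij : i < j := by simpa [prs] using hp
      rw [det_ord _ _ ![i, j] (Finset.card_pair hij.ne)]
      · simp [Matrix.det_fin_two]
      · intro a b hab
        fin_cases a <;> fin_cases b <;> simp_all
      · intro a
        fin_cases a <;> simp
    · intro p hp q hq
      revert p q
      decide
  · intro s hs hc
    exfalso
    apply hs
    obtain ⟨i, j, hij, rfl⟩ := Finset.card_eq_two.mp hc
    rw [Finset.mem_image]
    rcases lt_or_gt_of_ne hij with h | h
    · exact ⟨(i, j), by simpa [prs] using h, rfl⟩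
    · exact ⟨(j, i), by simpa [prs] using h, Finset.pair_comm _ _⟩

theorem eval2' (α : Form ℝ 7) (x y : Fin 7 → ℝ) :
    evalForm α ![x, y] = ∑ i, ∑ j, x i * mat2 α i j * y j := by
  rw [eval2]
  unfold prs
  rw [Finset.sum_filter, Fintype.sum_prod_type]
  have key : ∀ i j, x i * mat2 α i j * y j =
     (if i < j then α {i, j} * (x i * y j) else 0) - (if j < i then α {j, i} * (x i * y j) else 0) := by
    intro i j
    simp only [mat2, Matrix.of_apply]
    rcases lt_trichotomy i j with h | h | h
    · simp [h, h.le, not_lt.mpr h.le]; ring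
    · simp [h]
    · simp [h, h.le, not_lt.mpr h.le, Finset.pair_comm i j]; ring
  simp only [key, Finset.sum_sub_distrib]
  rw [Finset.sum_comm (f := fun i j => if j < i then α {j, i} * (x i * y j) else 0)]
  simp only [← Finset.sum_sub_distrib]
  refine Finset.sum_congr rfl fun i _ => Finset.sum_congr rfl fun j _ => ?_
  split_ifs <;> ring

theorem mat2_anti (α : Form ℝ 7) (i j : Fin 7) : mat2 α i j = - mat2 α j i := by
  simp only [mat2, Matrix.of_apply]
  rcases lt_trichotomy i j with h | h | h
  · simp [h, not_lt.mpr h.le, Finset.pair_comm i j]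
  · simp [h]
  · simp [h, not_lt.mpr h.le, Finset.pair_comm i j]

theorem iprod_mat (α : Form ℝ 7) (v : Fin 7 → ℝ) (j : Fin 7) :
    iprod v α {j} = ∑ i, v i * mat2 α i j := by
  unfold iprod
  refine Finset.sum_congr rfl fun i _ => ?_
  congr 1
  simp only [iprodB, mat2, Matrix.of_apply, Finset.mem_singleton]
  rcases lt_trichotomy i j with h | h | h
  · simp [h, h.ne, Finset.filter_singleton, not_lt.mpr h.le]
  · simp [h]
  · simp [h, h.ne', Finset.filter_singleton, not_lt.mpr h.le]

/-- cross product with coefficients. -/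
def T (A : Fin 7 → Fin 7 → ℝ) : Fin 7 → ℝ :=
  ![A 1 2 + A 3 4 + A 5 6,
    -A 0 2 + A 3 5 - A 4 6,
    A 0 1 - A 3 6 - A 4 5,
    -A 0 4 - A 1 5 + A 2 6,
    A 0 3 + A 1 6 + A 2 5,
    -A 0 6 + A 1 3 - A 2 4,
    A 0 5 - A 1 4 - A 2 3]

def cr (x y : Fin 7 → ℝ) : Fin 7 → ℝ := T fun i j => x i * y j - x j * y i

theorem cr_inner (a b c d : Fin 7 → ℝ) : ∑ k, cr a b k * cr c d k =
    (∑ k, a k * c k) * (∑ k, b k * d k) - (∑ k, a k * d k) * (∑ k, b k * c k) + Psi a b c d := by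
  simp [Fin.sum_univ_seven, cr, T, Psi, D4]
  ring

theorem wedge_psi (α : Form ℝ 7) (u : Finset (Fin 7)) : wedge α psi7 u =
    ∑ t ∈ suppPsi, if t ⊆ u then signMerge (u \ t) t * α (u \ t) * psi7 t else 0 := by
  have h1 : wedge α psi7 u = ∑ t ∈ u.powerset, signMerge (u \ t) t * α (u \ t) * psi7 t := by
    unfold wedge
    refine Finset.sum_bij' (fun s _ => u \ s) (fun s _ => u \ s) ?_ ?_ ?_ ?_ ?_
    · intro s _; simp
    · intro s _; simp
    · intro s hs; exact Finset.sdiff_sdiff_eq_self (Finset.mem_powerset.mp hs)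
    · intro s hs; exact Finset.sdiff_sdiff_eq_self (Finset.mem_powerset.mp hs)
    · intro s hs
      simp only [Finset.sdiff_sdiff_eq_self (Finset.mem_powerset.mp hs)]
  have h2 : u.powerset = Finset.univ.filter (fun t => t ⊆ u) := by ext; simp
  rw [h1, h2, Finset.sum_filter]
  symm
  apply Finset.sum_subset (Finset.subset_univ _)
  intro s _ hs
  rw [psi7_zero s hs]; simp

theorem sm_even (s t : Finset (Fin 7)) (h : Even (((s ×ˢ t).filter (fun p => p.2 < p.1)).card)) :
    (signMerge s t : ℝ) = 1 := h.neg_one_pow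
theorem sm_odd (s t : Finset (Fin 7)) (h : Odd (((s ×ˢ t).filter (fun p => p.2 < p.1)).card)) :
    (signMerge s t : ℝ) = -1 := h.neg_one_pow

theorem mat2_lt (α : Form ℝ 7) {i j : Fin 7} (h : i < j) : mat2 α i j = α {i, j} := by
  simp [mat2, h]

theorem w0 (α : Form ℝ 7) : wedge α psi7 {1, 2, 3, 4, 5, 6} = T (mat2 α) 0 := by
  rw [wedge_psi, sum_suppPsi, if_pos (by decide), if_pos (by decide), if_pos (by decide), if_neg (by decide), if_neg (by decide), if_neg (by decide), if_neg (by decide)]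
  rw [show ({1, 2, 3, 4, 5, 6} \ {3, 4, 5, 6} : Finset (Fin 7)) = {1, 2} by decide, sm_even {1, 2} {3, 4, 5, 6} (by decide)]
  rw [show ({1, 2, 3, 4, 5, 6} \ {1, 2, 5, 6} : Finset (Fin 7)) = {3, 4} by decide, sm_even {3, 4} {1, 2, 5, 6} (by decide)]
  rw [show ({1, 2, 3, 4, 5, 6} \ {1, 2, 3, 4} : Finset (Fin 7)) = {5, 6} by decide, sm_even {5, 6} {1, 2, 3, 4} (by decide)]
  rw [← mat2_lt α (show (1 : Fin 7) < 2 by decide), ← mat2_lt α (show (3 : Fin 7) < 4 by decide), ← mat2_lt α (show (5 : Fin 7) < 6 by decide)]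
  simp only [psi_v1, psi_v2, psi_v3, psi_v4, psi_v5, psi_v6, psi_v7]
  simp [T]
  try ring

theorem w1 (α : Form ℝ 7) : wedge α psi7 {0, 2, 3, 4, 5, 6} = -T (mat2 α) 1 := by
  rw [wedge_psi, sum_suppPsi, if_pos (by decide), if_neg (by decide), if_neg (by decide), if_pos (by decide), if_pos (by decide), if_neg (by decide), if_neg (by decide)]
  rw [show ({0, 2, 3, 4, 5, 6} \ {3, 4, 5, 6} : Finset (Fin 7)) = {0, 2} by decide, sm_even {0, 2} {3, 4, 5, 6} (by decide)]
  rw [show ({0, 2, 3, 4, 5, 6} \ {0, 2, 4, 6} : Finset (Fin 7)) = {3, 5} by decide, sm_odd {3, 5} {0, 2, 4, 6} (by decide)]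
  rw [show ({0, 2, 3, 4, 5, 6} \ {0, 2, 3, 5} : Finset (Fin 7)) = {4, 6} by decide, sm_odd {4, 6} {0, 2, 3, 5} (by decide)]
  rw [← mat2_lt α (show (0 : Fin 7) < 2 by decide), ← mat2_lt α (show (3 : Fin 7) < 5 by decide), ← mat2_lt α (show (4 : Fin 7) < 6 by decide)]
  simp only [psi_v1, psi_v2, psi_v3, psi_v4, psi_v5, psi_v6, psi_v7]
  simp [T]
  try ring

theorem w2 (α : Form ℝ 7) : wedge α psi7 {0, 1, 3, 4, 5, 6} = T (mat2 α) 2 := by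
  rw [wedge_psi, sum_suppPsi, if_pos (by decide), if_neg (by decide), if_neg (by decide), if_neg (by decide), if_neg (by decide), if_pos (by decide), if_pos (by decide)]
  rw [show ({0, 1, 3, 4, 5, 6} \ {3, 4, 5, 6} : Finset (Fin 7)) = {0, 1} by decide, sm_even {0, 1} {3, 4, 5, 6} (by decide)]
  rw [show ({0, 1, 3, 4, 5, 6} \ {0, 1, 4, 5} : Finset (Fin 7)) = {3, 6} by decide, sm_even {3, 6} {0, 1, 4, 5} (by decide)]
  rw [show ({0, 1, 3, 4, 5, 6} \ {0, 1, 3, 6} : Finset (Fin 7)) = {4, 5} by decide, sm_even {4, 5} {0, 1, 3, 6} (by decide)]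
  rw [← mat2_lt α (show (0 : Fin 7) < 1 by decide), ← mat2_lt α (show (3 : Fin 7) < 6 by decide), ← mat2_lt α (show (4 : Fin 7) < 5 by decide)]
  simp only [psi_v1, psi_v2, psi_v3, psi_v4, psi_v5, psi_v6, psi_v7]
  simp [T]
  try ring

theorem w3 (α : Form ℝ 7) : wedge α psi7 {0, 1, 2, 4, 5, 6} = -T (mat2 α) 3 := by
  rw [wedge_psi, sum_suppPsi, if_neg (by decide), if_pos (by decide), if_neg (by decide), if_pos (by decide), if_neg (by decide), if_pos (by decide), if_neg (by decide)]
  rw [show ({0, 1, 2, 4, 5, 6} \ {1, 2, 5, 6} : Finset (Fin 7)) = {0, 4} by decide, sm_even {0, 4} {1, 2, 5, 6} (by decide)]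
  rw [show ({0, 1, 2, 4, 5, 6} \ {0, 2, 4, 6} : Finset (Fin 7)) = {1, 5} by decide, sm_even {1, 5} {0, 2, 4, 6} (by decide)]
  rw [show ({0, 1, 2, 4, 5, 6} \ {0, 1, 4, 5} : Finset (Fin 7)) = {2, 6} by decide, sm_even {2, 6} {0, 1, 4, 5} (by decide)]
  rw [← mat2_lt α (show (0 : Fin 7) < 4 by decide), ← mat2_lt α (show (1 : Fin 7) < 5 by decide), ← mat2_lt α (show (2 : Fin 7) < 6 by decide)]
  simp only [psi_v1, psi_v2, psi_v3, psi_v4, psi_v5, psi_v6, psi_v7]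
  simp [T]
  try ring

theorem w4 (α : Form ℝ 7) : wedge α psi7 {0, 1, 2, 3, 5, 6} = T (mat2 α) 4 := by
  rw [wedge_psi, sum_suppPsi, if_neg (by decide), if_pos (by decide), if_neg (by decide), if_neg (by decide), if_pos (by decide), if_neg (by decide), if_pos (by decide)]
  rw [show ({0, 1, 2, 3, 5, 6} \ {1, 2, 5, 6} : Finset (Fin 7)) = {0, 3} by decide, sm_even {0, 3} {1, 2, 5, 6} (by decide)]
  rw [show ({0, 1, 2, 3, 5, 6} \ {0, 2, 3, 5} : Finset (Fin 7)) = {1, 6} by decide, sm_odd {1, 6} {0, 2, 3, 5} (by decide)]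
  rw [show ({0, 1, 2, 3, 5, 6} \ {0, 1, 3, 6} : Finset (Fin 7)) = {2, 5} by decide, sm_odd {2, 5} {0, 1, 3, 6} (by decide)]
  rw [← mat2_lt α (show (0 : Fin 7) < 3 by decide), ← mat2_lt α (show (1 : Fin 7) < 6 by decide), ← mat2_lt α (show (2 : Fin 7) < 5 by decide)]
  simp only [psi_v1, psi_v2, psi_v3, psi_v4, psi_v5, psi_v6, psi_v7]
  simp [T]
  try ring

theorem w5 (α : Form ℝ 7) : wedge α psi7 {0, 1, 2, 3, 4, 6} = -T (mat2 α) 5 := by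
  rw [wedge_psi, sum_suppPsi, if_neg (by decide), if_neg (by decide), if_pos (by decide), if_pos (by decide), if_neg (by decide), if_neg (by decide), if_pos (by decide)]
  rw [show ({0, 1, 2, 3, 4, 6} \ {1, 2, 3, 4} : Finset (Fin 7)) = {0, 6} by decide, sm_even {0, 6} {1, 2, 3, 4} (by decide)]
  rw [show ({0, 1, 2, 3, 4, 6} \ {0, 2, 4, 6} : Finset (Fin 7)) = {1, 3} by decide, sm_odd {1, 3} {0, 2, 4, 6} (by decide)]
  rw [show ({0, 1, 2, 3, 4, 6} \ {0, 1, 3, 6} : Finset (Fin 7)) = {2, 4} by decide, sm_odd {2, 4} {0, 1, 3, 6} (by decide)]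
  rw [← mat2_lt α (show (0 : Fin 7) < 6 by decide), ← mat2_lt α (show (1 : Fin 7) < 3 by decide), ← mat2_lt α (show (2 : Fin 7) < 4 by decide)]
  simp only [psi_v1, psi_v2, psi_v3, psi_v4, psi_v5, psi_v6, psi_v7]
  simp [T]
  try ring

theorem w6 (α : Form ℝ 7) : wedge α psi7 {0, 1, 2, 3, 4, 5} = T (mat2 α) 6 := by
  rw [wedge_psi, sum_suppPsi, if_neg (by decide), if_neg (by decide), if_pos (by decide), if_neg (by decide), if_pos (by decide), if_pos (by decide), if_neg (by decide)]
  rw [show ({0, 1, 2, 3, 4, 5} \ {1, 2, 3, 4} : Finset (Fin 7)) = {0, 5} by decide, sm_even {0, 5} {1, 2, 3, 4} (by decide)]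
  rw [show ({0, 1, 2, 3, 4, 5} \ {0, 2, 3, 5} : Finset (Fin 7)) = {1, 4} by decide, sm_even {1, 4} {0, 2, 3, 5} (by decide)]
  rw [show ({0, 1, 2, 3, 4, 5} \ {0, 1, 4, 5} : Finset (Fin 7)) = {2, 3} by decide, sm_even {2, 3} {0, 1, 4, 5} (by decide)]
  rw [← mat2_lt α (show (0 : Fin 7) < 5 by decide), ← mat2_lt α (show (1 : Fin 7) < 4 by decide), ← mat2_lt α (show (2 : Fin 7) < 3 by decide)]
  simp only [psi_v1, psi_v2, psi_v3, psi_v4, psi_v5, psi_v6, psi_v7]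
  simp [T]
  try ring


theorem wedge_grade (α : Form ℝ 7) (h2 : isGrade 2 α) (u : Finset (Fin 7)) (hu : u.card ≠ 6) :
    wedge α psi7 u = 0 := by
  rw [wedge_psi]
  refine Finset.sum_eq_zero fun t ht => ?_
  split_ifs with h
  · have hc : t.card = 4 := by
      simp only [suppPsi, Finset.mem_insert, Finset.mem_singleton] at ht
      rcases ht with rfl | rfl | rfl | rfl | rfl | rfl | rfl <;> rfl
    rw [h2 (u \ t), mul_zero, zero_mul]
    rw [Finset.card_sdiff_of_subset h]
    omega
  · rfl

set_option maxRecDepth 100000 in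
theorem card6 : ∀ s : Finset (Fin 7), s.card = 6 →
    s = {1, 2, 3, 4, 5, 6} ∨ s = {0, 2, 3, 4, 5, 6} ∨ s = {0, 1, 3, 4, 5, 6} ∨
    s = {0, 1, 2, 4, 5, 6} ∨ s = {0, 1, 2, 3, 5, 6} ∨ s = {0, 1, 2, 3, 4, 6} ∨
    s = {0, 1, 2, 3, 4, 5} := by
  decide

theorem wedge_iff (α : Form ℝ 7) (h2 : isGrade 2 α) :
    wedge α psi7 = 0 ↔ ∀ k, T (mat2 α) k = 0 := by
  constructor
  · intro h k
    have e : ∀ s, wedge α psi7 s = 0 := fun s => by rw [h]; rfl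
    fin_cases k
    · have := e {1, 2, 3, 4, 5, 6}
      rw [w0] at this
      first | exact this | exact neg_eq_zero.mp this
    · have := e {0, 2, 3, 4, 5, 6}
      rw [w1] at this
      first | exact this | exact neg_eq_zero.mp this
    · have := e {0, 1, 3, 4, 5, 6}
      rw [w2] at this
      first | exact this | exact neg_eq_zero.mp this
    · have := e {0, 1, 2, 4, 5, 6}
      rw [w3] at this
      first | exact this | exact neg_eq_zero.mp this
    · have := e {0, 1, 2, 3, 5, 6}
      rw [w4] at this
      first | exact this | exact neg_eq_zero.mp this
    · have := e {0, 1, 2, 3, 4, 6}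
      rw [w5] at this
      first | exact this | exact neg_eq_zero.mp this
    · have := e {0, 1, 2, 3, 4, 5}
      rw [w6] at this
      first | exact this | exact neg_eq_zero.mp this
  · intro h
    funext s
    by_cases hs : s.card = 6
    · have := card6 s hs
      rcases this with rfl | rfl | rfl | rfl | rfl | rfl | rfl
      · rw [w0, h]; simp
      · rw [w1, h]; simp
      · rw [w2, h]; simp
      · rw [w3, h]; simp
      · rw [w4, h]; simp
      · rw [w5, h]; simp
      · rw [w6, h]; simp
    · rw [wedge_grade α h2 s hs]; rfl

theorem mat_expand (u : Fin 4 → (Fin 7 → ℝ))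
    (hu : ∀ i j, (∑ k, u i k * u j k) = if i = j then (1 : ℝ) else 0)
    (α : Form ℝ 7)
    (hU : ∀ v : Fin 7 → ℝ, (∀ i, ∑ k, v k * u i k = 0) → iprod v α = 0) (k j : Fin 7) :
    mat2 α k j = ∑ a, ∑ b, u a k * u b j * evalForm α ![u a, u b] := by
  have step : ∀ k j, mat2 α k j = ∑ a, u a k * ∑ m, u a m * mat2 α m j := by
    intro k j
    have h := hU (fun m => (if m = k then 1 else 0) - ∑ a, u a k * u a m) (by
      intro i
      simp only [sub_mul, Finset.sum_sub_distrib, ite_mul, one_mul, zero_mul, Finset.sum_ite_eq',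
        Finset.mem_univ, if_true, Finset.sum_mul]
      rw [Finset.sum_comm]
      simp only [mul_assoc, ← Finset.mul_sum, hu]
      simp)
    have h' := congrFun h {j}
    rw [iprod_mat] at h'
    simp only [sub_mul, Finset.sum_sub_distrib, ite_mul, one_mul, zero_mul, Finset.sum_ite_eq',
        Finset.mem_univ, if_true, Finset.sum_mul, Pi.zero_apply] at h'
    rw [Finset.sum_comm] at h'
    simp only [mul_assoc, ← Finset.mul_sum] at h'
    linarith
  rw [step k j]
  refine Finset.sum_congr rfl fun a _ => ?_
  have : ∀ m, mat2 α m j = ∑ b, u b j * ∑ n, mat2 α m n * u b n := by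
    intro m
    rw [mat2_anti, step j m, ← Finset.sum_neg_distrib]
    refine Finset.sum_congr rfl fun b _ => ?_
    rw [← mul_neg, ← Finset.sum_neg_distrib]
    congr 1
    refine Finset.sum_congr rfl fun n _ => ?_
    rw [mat2_anti α n m]; ring
  simp only [eval2', mul_assoc]
  rw [← Finset.mul_sum]
  congr 1
  simp only [Finset.mul_sum]
  rw [Finset.sum_comm]
  conv_lhs => enter [2, m]; rw [this m]
  simp only [Finset.mul_sum]
  rw [Finset.sum_comm]
  rw [Finset.sum_comm]
  refine Finset.sum_congr rfl fun a _ => Finset.sum_congr rfl fun b _ =>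
    Finset.sum_congr rfl fun c _ => ?_
  ring

theorem eval_anti (α : Form ℝ 7) (x y : Fin 7 → ℝ) : evalForm α ![x, y] = - evalForm α ![y, x] := by
  rw [eval2, eval2, ← Finset.sum_neg_distrib]
  refine Finset.sum_congr rfl fun p _ => ?_
  ring

theorem eval_self (α : Form ℝ 7) (x : Fin 7 → ℝ) : evalForm α ![x, x] = 0 := by
  have := eval_anti α x x
  linarith

theorem T_expand (u : Fin 4 → (Fin 7 → ℝ))
    (hu : ∀ i j, (∑ k, u i k * u j k) = if i = j then (1 : ℝ) else 0)
    (α : Form ℝ 7)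
    (hU : ∀ v : Fin 7 → ℝ, (∀ i, ∑ k, v k * u i k = 0) → iprod v α = 0) (k : Fin 7) :
    T (mat2 α) k = evalForm α ![u 0, u 1] * cr (u 0) (u 1) k
      + evalForm α ![u 0, u 2] * cr (u 0) (u 2) k
      + evalForm α ![u 0, u 3] * cr (u 0) (u 3) k
      + evalForm α ![u 1, u 2] * cr (u 1) (u 2) k
      + evalForm α ![u 3, u 1] * cr (u 3) (u 1) k
      + evalForm α ![u 2, u 3] * cr (u 2) (u 3) k := by
  have hA : ∀ i j, mat2 α i j = evalForm α ![u 0, u 1] * (u 0 i * u 1 j - u 0 j * u 1 i)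
      + evalForm α ![u 0, u 2] * (u 0 i * u 2 j - u 0 j * u 2 i)
      + evalForm α ![u 0, u 3] * (u 0 i * u 3 j - u 0 j * u 3 i)
      + evalForm α ![u 1, u 2] * (u 1 i * u 2 j - u 1 j * u 2 i)
      + evalForm α ![u 3, u 1] * (u 3 i * u 1 j - u 3 j * u 1 i)
      + evalForm α ![u 2, u 3] * (u 2 i * u 3 j - u 2 j * u 3 i) := by
    intro i j
    rw [mat_expand u hu α hU i j]
    simp only [Fin.sum_univ_four, eval_self, eval_anti α (u 1) (u 0), eval_anti α (u 2) (u 0),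
      eval_anti α (u 3) (u 0), eval_anti α (u 2) (u 1), eval_anti α (u 1) (u 3),
      eval_anti α (u 3) (u 2)]
    ring
  fin_cases k <;> simp [T, cr, hA] <;> ring

theorem eq_of_inner (p q : Fin 7 → ℝ) (hp : ∑ k, p k * p k = 1) (hq : ∑ k, q k * q k = 1)
    (hpq : ∑ k, p k * q k = 1) (k : Fin 7) : p k = q k := by
  have h : ∑ k, (p k - q k) ^ 2 = 0 := by
    have : ∀ k, (p k - q k) ^ 2 = p k * p k + q k * q k - 2 * (p k * q k) := fun k => by ring
    simp only [this, Finset.sum_sub_distrib, Finset.sum_add_distrib, ← Finset.mul_sum, hp, hq, hpq]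
    norm_num
  have h' := (Finset.sum_eq_zero_iff_of_nonneg (fun k _ => sq_nonneg (p k - q k))).mp h k
    (Finset.mem_univ k)
  have := pow_eq_zero_iff (two_ne_zero) |>.mp h'
  linarith

theorem Psi_rep1 (a b d : Fin 7 → ℝ) : Psi a b a d = 0 := by
  simp only [Psi, D4]; ring
theorem Psi_rep2 (a b : Fin 7 → ℝ) : Psi a b a b = 0 := Psi_rep1 a b b
theorem Psi_s1 (a b c d : Fin 7 → ℝ) : Psi a c d b = Psi a b c d := by
  simp only [Psi, D4]; ring
theorem Psi_s2 (a b c d : Fin 7 → ℝ) : Psi a d b c = Psi a b c d := by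
  simp only [Psi, D4]; ring

/-- Lemma 6.3.  Let `U ⊂ ℝ⁷` be a coassociative subspace with positively
oriented orthonormal basis `(u₁,u₂,u₃,u₄)` (so `*₇φ(u₁,u₂,u₃,u₄) = 1`), and let
`α ∈ Λ²U* = {α : i(v)α = 0 for v ⊥ U}`.  Then `α` is anti-self-dual on `U` (with respect to
the induced metric and this orientation) if and only if `α ∧ *₇φ = 0`. -/
theorem statement15 (u : Fin 4 → (Fin 7 → ℝ))
    (hu : ∀ i j, (∑ k, u i k * u j k) = if i = j then (1 : ℝ) else 0)
    (hCoasso : evalForm psi7 u = 1)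
    (α : Form ℝ 7) (h2 : isGrade 2 α)
    (hU : ∀ v : Fin 7 → ℝ, (∀ i, ∑ k, v k * u i k = 0) → iprod v α = 0) :
    (evalForm α ![u 0, u 1] + evalForm α ![u 2, u 3] = 0 ∧
     evalForm α ![u 0, u 2] + evalForm α ![u 3, u 1] = 0 ∧
     evalForm α ![u 0, u 3] + evalForm α ![u 1, u 2] = 0) ↔
    wedge α psi7 = 0 := by
  rw [eval_psi] at hCoasso
  have n : ∀ i j, i ≠ j → ∑ k, cr (u i) (u j) k * cr (u i) (u j) k = 1 := by
    intro i j h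
    rw [cr_inner, Psi_rep2]
    simp [hu, h]
  have o : ∀ i j, i ≠ 0 → j ≠ 0 → i ≠ j → ∑ k, cr (u 0) (u i) k * cr (u 0) (u j) k = 0 := by
    intro i j hi hj h
    rw [cr_inner, Psi_rep1]
    simp [hu, h, hi.symm, hj.symm]
  have e1 : ∀ k, cr (u 0) (u 1) k = cr (u 2) (u 3) k := by
    refine eq_of_inner _ _ (n _ _ (by decide)) (n _ _ (by decide)) ?_
    rw [cr_inner, hCoasso]; simp [hu]
  have e2 : ∀ k, cr (u 0) (u 2) k = cr (u 3) (u 1) k := by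
    refine eq_of_inner _ _ (n _ _ (by decide)) (n _ _ (by decide)) ?_
    rw [cr_inner, Psi_s1, hCoasso]; simp [hu]
  have e3 : ∀ k, cr (u 0) (u 3) k = cr (u 1) (u 2) k := by
    refine eq_of_inner _ _ (n _ _ (by decide)) (n _ _ (by decide)) ?_
    rw [cr_inner, Psi_s2, hCoasso]; simp [hu]
  have hT : ∀ k, T (mat2 α) k =
      (evalForm α ![u 0, u 1] + evalForm α ![u 2, u 3]) * cr (u 0) (u 1) k
      + (evalForm α ![u 0, u 2] + evalForm α ![u 3, u 1]) * cr (u 0) (u 2) k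
      + (evalForm α ![u 0, u 3] + evalForm α ![u 1, u 2]) * cr (u 0) (u 3) k := by
    intro k
    rw [T_expand u hu α hU, ← e1, ← e2, ← e3]; ring
  rw [wedge_iff α h2]
  constructor
  · rintro ⟨h1, h2, h3⟩ k
    rw [hT, h1, h2, h3]; ring
  · intro h
    simp only [hT] at h
    generalize evalForm α ![u 0, u 1] + evalForm α ![u 2, u 3] = x at h ⊢
    generalize evalForm α ![u 0, u 2] + evalForm α ![u 3, u 1] = y at h ⊢
    generalize evalForm α ![u 0, u 3] + evalForm α ![u 1, u 2] = z at h ⊢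
    have key : ∀ j, x * ∑ k, cr (u 0) (u 1) k * cr (u 0) (u j) k
        + y * ∑ k, cr (u 0) (u 2) k * cr (u 0) (u j) k
        + z * ∑ k, cr (u 0) (u 3) k * cr (u 0) (u j) k = 0 := by
      intro j
      simp only [Finset.mul_sum, ← Finset.sum_add_distrib]
      refine Finset.sum_eq_zero fun k _ => ?_
      linear_combination (cr (u 0) (u j) k) * h k
    have k1 := key 1
    have k2 := key 2
    have k3 := key 3
    rw [n 0 1 (by decide), o 2 1 (by decide) (by decide) (by decide),
      o 3 1 (by decide) (by decide) (by decide)] at k1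
    rw [n 0 2 (by decide), o 1 2 (by decide) (by decide) (by decide),
      o 3 2 (by decide) (by decide) (by decide)] at k2
    rw [n 0 3 (by decide), o 1 3 (by decide) (by decide) (by decide),
      o 2 3 (by decide) (by decide) (by decide)] at k3
    refine ⟨?_, ?_, ?_⟩ <;> linarith

end FMpaper
end
end
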